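/- Suppose |r̄(i,a,j)| ≤ B for all (i,a,j), and let Q' : S×A → ℝ be any function. Set C := max{3·w²·B² + 6·(α²·w² + (1−w)²)·‖Q'‖², 6·(α²·w² + (1−w)²)}. Then for every w ∈ ℝ, every Q : S×A → ℝ and every (i,a) ∈ S×A, ∑_{j∈S} p(j|i,a)·(w·(r̄(i,a,j) + α·max_{b∈A} Q(j,b)) + (1−w)·max_{c∈A} Q(i,c) − (H_w Q)(i,a))² ≤ C·(1 + ‖Q − Q'‖²). -/

import Mathlib

open Finset

/-- Maximum of a real-valued function over a nonempty finite type. -/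
noncomputable def fmax {A : Type*} [Fintype A] [Nonempty A] (f : A → ℝ) : ℝ :=
  Finset.univ.sup' Finset.univ_nonempty f

/-- Sup (maximum-absolute-value) norm of a real-valued function on a nonempty finite type. -/
noncomputable def supNorm {I : Type*} [Fintype I] [Nonempty I] (f : I → ℝ) : ℝ :=
  fmax (fun i => |f i|)

/-- The over-relaxation bound `w* = min_{(i,a)} 1/(1 - α p(i|i,a))`. -/
noncomputable def wstar {S A : Type*} [Fintype S] [Fintype A] [Nonempty S] [Nonempty A]
    (p : S → A → S → ℝ) (α : ℝ) : ℝ :=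
  Finset.univ.inf' Finset.univ_nonempty (fun ia : S × A => 1 / (1 - α * p ia.1 ia.2 ia.1))

/-- The SOR Q-Bellman operator `H_w`. -/
noncomputable def Hw {S A : Type*} [Fintype S] [Fintype A] [Nonempty S] [Nonempty A]
    (p : S → A → S → ℝ) (r : S → A → ℝ) (α w : ℝ) (Q : S → A → ℝ) : S → A → ℝ :=
  fun i a => w * (r i a + α * ∑ j, p i a j * fmax (Q j)) + (1 - w) * fmax (Q i)

theorem le_fmax_aux {A : Type*} [Fintype A] [Nonempty A] (f : A → ℝ) (a : A) : f a ≤ fmax f :=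
  Finset.le_sup' f (Finset.mem_univ a)

theorem abs_fmax_le_aux {A : Type*} [Fintype A] [Nonempty A] (f : A → ℝ) (M : ℝ)
    (h : ∀ a, |f a| ≤ M) : |fmax f| ≤ M := by
  obtain ⟨a, -, ha⟩ := Finset.exists_mem_eq_sup' (Finset.univ_nonempty (α := A)) f
  have : fmax f = f a := ha
  rw [this]
  exact h a

theorem var_le_aux {S : Type*} [Fintype S] (p x : S → ℝ) (h1 : ∑ j, p j = 1) :
    ∑ j, p j * (x j - ∑ k, p k * x k) ^ 2 ≤ ∑ j, p j * x j ^ 2 := by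
  set m := ∑ k, p k * x k with hm
  have h : ∀ m : ℝ, ∑ j, p j * (x j - m) ^ 2
      = ∑ j, p j * x j ^ 2 - 2 * m * ∑ j, p j * x j + m ^ 2 * ∑ j, p j := by
    intro m
    rw [Finset.mul_sum, Finset.mul_sum, ← Finset.sum_sub_distrib, ← Finset.sum_add_distrib]
    exact Finset.sum_congr rfl fun j _ => by ring
  rw [h m, h1, ← hm]
  nlinarith [sq_nonneg m]

/-- Conditional second moment of the SOR Q-learning noise is bounded by `C (1 + ‖Q - Q'‖²)`. -/
theorem noise_second_moment_bound_C {S A : Type*} [Fintype S] [Fintype A]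
    [Nonempty S] [Nonempty A]
    (p : S → A → S → ℝ) (rb : S → A → S → ℝ) (α B : ℝ)
    (hp : ∀ i a j, 0 ≤ p i a j) (hsum : ∀ i a, ∑ j, p i a j = 1)
    (hα0 : 0 ≤ α) (hα1 : α < 1)
    (hB : 0 ≤ B) (hr : ∀ i a j, |rb i a j| ≤ B) :
    ∀ (w : ℝ) (Q' : S → A → ℝ),
      ∀ (Q : S → A → ℝ) (i : S) (a : A),
        ∑ j, p i a j *
            (w * (rb i a j + α * fmax (Q j)) + (1 - w) * fmax (Q i) -
              Hw p (fun i a => ∑ j, p i a j * rb i a j) α w Q i a) ^ 2 ≤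
          max (3 * w ^ 2 * B ^ 2 +
                6 * (α ^ 2 * w ^ 2 + (1 - w) ^ 2) *
                  (supNorm (fun ia : S × A => Q' ia.1 ia.2)) ^ 2)
              (6 * (α ^ 2 * w ^ 2 + (1 - w) ^ 2)) *
            (1 + (supNorm (fun ia : S × A => Q ia.1 ia.2 - Q' ia.1 ia.2)) ^ 2) := by
  intro w Q' Q i a
  set N := supNorm (fun ia : S × A => Q' ia.1 ia.2) with hN
  set D := supNorm (fun ia : S × A => Q ia.1 ia.2 - Q' ia.1 ia.2) with hD
  have hQ : ∀ j, |fmax (Q j)| ≤ N + D := by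
    intro j
    refine abs_fmax_le_aux _ _ fun b => ?_
    have h1 : |Q' j b| ≤ N := le_fmax_aux (fun ia : S × A => |Q' ia.1 ia.2|) (j, b)
    have h2 : |Q j b - Q' j b| ≤ D :=
      le_fmax_aux (fun ia : S × A => |Q ia.1 ia.2 - Q' ia.1 ia.2|) (j, b)
    have h3 := abs_add_le (Q' j b) (Q j b - Q' j b)
    rw [add_sub_cancel] at h3
    linarith
  have hm : ∑ k, p i a k * (w * (rb i a k + α * fmax (Q k)))
      = w * (∑ k, p i a k * rb i a k + α * ∑ k, p i a k * fmax (Q k)) := by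
    rw [Finset.mul_sum, ← Finset.sum_add_distrib, Finset.mul_sum]
    exact Finset.sum_congr rfl fun j _ => by ring
  have hv := var_le_aux (p i a) (fun k => w * (rb i a k + α * fmax (Q k))) (hsum i a)
  simp only [hm] at hv
  have hb : ∀ j, (w * (rb i a j + α * fmax (Q j))) ^ 2 ≤
      2 * w ^ 2 * B ^ 2 + 4 * (α ^ 2 * w ^ 2) * N ^ 2 + 4 * (α ^ 2 * w ^ 2) * D ^ 2 := by
    intro j
    have h1 : (rb i a j) ^ 2 ≤ B ^ 2 := sq_le_sq' (abs_le.1 (hr i a j)).1 (abs_le.1 (hr i a j)).2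
    have h2 : (fmax (Q j)) ^ 2 ≤ (N + D) ^ 2 := sq_le_sq' (abs_le.1 (hQ j)).1 (abs_le.1 (hQ j)).2
    have h3 : (fmax (Q j)) ^ 2 ≤ 2 * N ^ 2 + 2 * D ^ 2 := by nlinarith [sq_nonneg (N - D)]
    have h4 := mul_le_mul_of_nonneg_left h1 (sq_nonneg w)
    have h5 := mul_le_mul_of_nonneg_left h3 (sq_nonneg (α * w))
    have h6 := sq_nonneg (w * rb i a j - w * α * fmax (Q j))
    nlinarith
  have hE : ∑ j, p i a j * (w * (rb i a j + α * fmax (Q j))) ^ 2 ≤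
      2 * w ^ 2 * B ^ 2 + 4 * (α ^ 2 * w ^ 2) * N ^ 2 + 4 * (α ^ 2 * w ^ 2) * D ^ 2 := by
    refine (Finset.sum_le_sum fun j _ => mul_le_mul_of_nonneg_left (hb j) (hp i a j)).trans ?_
    rw [← Finset.sum_mul, hsum, one_mul]
  have hL : ∑ j, p i a j * (w * (rb i a j + α * fmax (Q j)) + (1 - w) * fmax (Q i) -
        Hw p (fun i a => ∑ j, p i a j * rb i a j) α w Q i a) ^ 2
      = ∑ j, p i a j * (w * (rb i a j + α * fmax (Q j)) -
        w * (∑ k, p i a k * rb i a k + α * ∑ k, p i a k * fmax (Q k))) ^ 2 := by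
    refine Finset.sum_congr rfl fun j _ => ?_
    simp only [Hw]
    ring
  rw [hL]
  refine hv.trans (hE.trans ?_)
  set c1 := 3 * w ^ 2 * B ^ 2 + 6 * (α ^ 2 * w ^ 2 + (1 - w) ^ 2) * N ^ 2 with hc1
  set c2 := 6 * (α ^ 2 * w ^ 2 + (1 - w) ^ 2) with hc2
  have g1 : 2 * w ^ 2 * B ^ 2 + 4 * (α ^ 2 * w ^ 2) * N ^ 2 ≤ c1 := by
    have e1 : 0 ≤ w ^ 2 * B ^ 2 := by positivity
    have e2 : 0 ≤ α ^ 2 * w ^ 2 * N ^ 2 := by positivity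
    have e3 : 0 ≤ (1 - w) ^ 2 * N ^ 2 := by positivity
    rw [hc1, hc2]
    nlinarith
  have g2 : 4 * (α ^ 2 * w ^ 2) ≤ c2 := by
    have e2 : 0 ≤ α ^ 2 * w ^ 2 := by positivity
    have e3 : 0 ≤ (1 - w) ^ 2 := by positivity
    rw [hc2]
    linarith
  have g3 := mul_le_mul_of_nonneg_right (g2.trans (le_max_right c1 c2)) (sq_nonneg D)
  have g4 := g1.trans (le_max_left c1 c2)
  linarith
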